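/- Let Y₁,…,Yₙ be a stationary (G,θ)-geometrically ergodic hidden Markov chain on ℕ with stationary output distribution ρ, and let ρ̂⁽ⁿ⁾ be the empirical distribution ρ̂⁽ⁿ⁾_y = (1/n)∑_{i=1}^n 1[Y_i = y]. Then for every n ∈ ℕ and ε > 0, P( ‖ρ − ρ̂⁽ⁿ⁾‖_∞ > √((1+2Gθ)/(n(1−θ))) + ε ) ≤ exp(−n(1−θ)²ε²/(2G²)), where ‖·‖_∞ denotes the supremum over coordinates y ∈ ℕ. -/

import Mathlib

open scoped BigOperators
open Filter

noncomputable section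

/-- Total variation distance `‖μ − ν‖_TV = (1/2) ∑ₛ |μ(s) − ν(s)|`. -/
def tv {α : Type*} (μ ν : α → ℝ) : ℝ := (1 / 2) * ∑' s, |μ s - ν s|

/-- Column-stochastic Markov kernel on ℕ: `A y x = A(y|x)`. -/
def IsKernel (A : ℕ → ℕ → ℝ) : Prop :=
  (∀ y x, 0 ≤ A y x) ∧ ∀ x, ∑' y, A y x = 1

/-- Stochastic vector on ℕ. -/
def IsStochastic (ξ : ℕ → ℝ) : Prop := (∀ x, 0 ≤ ξ x) ∧ ∑' x, ξ x = 1

/-- Kernel applied to a vector: `(Aξ)_y = ∑ₓ A(y|x) ξₓ`. -/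
def kerApp (A : ℕ → ℕ → ℝ) (ξ : ℕ → ℝ) : ℕ → ℝ := fun y => ∑' x, A y x * ξ x

/-- Iterated kernel application: `kerIter A s ξ = Aˢ ξ`. -/
def kerIter (A : ℕ → ℕ → ℝ) : ℕ → (ℕ → ℝ) → ℕ → ℝ
  | 0, ξ => ξ
  | s + 1, ξ => kerApp A (kerIter A s ξ)

/-- Point mass at `x`. -/
def dirac (x : ℕ) : ℕ → ℝ := fun y => if y = x then 1 else 0

/-- `(G,θ)`-geometric ergodicity of the kernel `A` with stationary distribution `π`:
`τ_{s+1} = sup_x ‖Aˢ δₓ − π‖_TV ≤ G θˢ` for all `s ≥ 0` (i.e. `τ_s ≤ G θ^{s-1}` for `s ≥ 1`),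
with `1 ≤ G` and `0 ≤ θ < 1`. -/
def IsGeomErgodic (A : ℕ → ℕ → ℝ) (π : ℕ → ℝ) (G θ : ℝ) : Prop :=
  1 ≤ G ∧ 0 ≤ θ ∧ θ < 1 ∧ IsStochastic π ∧ kerApp A π = π ∧
    ∀ (s x : ℕ), tv (kerIter A s (dirac x)) π ≤ G * θ ^ s

/-- Joint law of the Markov chain `(p₁, A)` on `ℕⁿ`. -/
def markovLaw (p : ℕ → ℝ) (A : ℕ → ℕ → ℝ) : (n : ℕ) → (Fin n → ℕ) → ℝ
  | 0, _ => 1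
  | n + 1, x => p (x 0) * ∏ i : Fin n, A (x i.succ) (x i.castSucc)

/-- Joint law of the hidden Markov chain `(p₁, A, B)` on `ℕⁿ`. -/
def hmmLaw (p : ℕ → ℝ) (A B : ℕ → ℕ → ℝ) (n : ℕ) (y : Fin n → ℕ) : ℝ :=
  ∑' x : Fin n → ℕ, markovLaw p A n x * ∏ i : Fin n, B (y i) (x i)

/-- Probability of an event under a law. -/
def prob {α : Type*} (μ : α → ℝ) (S : Set α) : ℝ := ∑' s : S, μ s.1

/-- Expectation of a function under a law. -/
def expect {α : Type*} (μ : α → ℝ) (f : α → ℝ) : ℝ := ∑' s, μ s * f s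

/-- Empirical distribution of a sample `Y ∈ ℕⁿ`. -/
def emp {n : ℕ} (Y : Fin n → ℕ) (v : ℕ) : ℝ :=
  (∑ i : Fin n, if Y i = v then (1 : ℝ) else 0) / n

/-!
*Mean.* `‖ρ - ρ̂‖_∞ ≤ ‖ρ - ρ̂‖₂`, and `𝔼‖ρ - ρ̂‖₂²` is governed by the expected number of pairs
`i, j` with `Yᵢ = Yⱼ`. The diagonal contributes `n`. For `j = i + s`, conditioning on `(Xᵢ, Yᵢ)`
shows that the collision probability exceeds its independent value `∑ᵥ ρ(v)²` by at most
`‖Aˢδ_x - π‖_TV ≤ Gθˢ`, so summing the geometric series bounds `𝔼‖ρ - ρ̂‖_∞²`.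

*Concentration.* `g = ‖ρ - ρ̂‖_∞` changes by at most `1/n` when one coordinate of `Y` changes.
Reveal the pairs `(X₁, Y₁), (X₂, Y₂), …` one at a time: given the past, the conditional mean of `g`
depends on the newly revealed `(x, y)` with oscillation at most
`(1/n) (1 + ∑_{s ≥ 1} ‖Aˢδ_x - Aˢδ_{x'}‖_TV) ≤ 2G / (n(1 - θ))`. Hoeffding's lemma for each pair and
a Chernoff bound then give McDiarmid's inequality for `g`.
-/

open scoped ENNReal

section Laws

open MeasureTheory ProbabilityTheory

variable {α β : Type*} {μ ν ξ : α → ℝ} {f g : α → ℝ} {a b c : ℝ}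

/-- Probability weights on an arbitrary type. This extends `IsStochastic` beyond `ℕ`, and replaces
the junk-valued `∑'` by `HasSum`. -/
structure IsLaw (μ : α → ℝ) : Prop where
  nonneg : ∀ a, 0 ≤ μ a
  hasSum_one : HasSum μ 1

lemma IsStochastic.isLaw {μ : ℕ → ℝ} (hμ : IsStochastic μ) : IsLaw μ := by
  refine ⟨hμ.1, ?_⟩
  have hsum : Summable μ := by
    by_contra h
    exact zero_ne_one ((tsum_eq_zero_of_not_summable h).symm.trans hμ.2)
  exact hμ.2 ▸ hsum.hasSum

lemma IsKernel.isLaw {A : ℕ → ℕ → ℝ} (hA : IsKernel A) (x : ℕ) : IsLaw (A · x) :=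
  IsStochastic.isLaw ⟨(hA.1 · x), hA.2 x⟩

lemma IsLaw.le_one (hμ : IsLaw μ) (a : α) : μ a ≤ 1 :=
  le_hasSum hμ.hasSum_one a fun b _ => hμ.nonneg b

lemma IsLaw.nonempty (hμ : IsLaw μ) : Nonempty α := by
  by_contra h
  rw [not_nonempty_iff] at h
  exact zero_ne_one (hasSum_empty.unique hμ.hasSum_one)

lemma IsLaw.of_comp_equiv (e : β ≃ α) (h : IsLaw (μ ∘ e)) : IsLaw μ :=
  ⟨fun a => by simpa using h.nonneg (e.symm a), e.hasSum_iff.1 h.hasSum_one⟩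

lemma isLaw_const_one [Unique α] : IsLaw fun _ : α => (1 : ℝ) :=
  ⟨fun _ => zero_le_one, hasSum_unique _⟩

lemma memℓp_infty_of_mem_Icc (hf : ∀ x, f x ∈ Set.Icc a b) : Memℓp f ∞ :=
  memℓp_infty ⟨max |a| |b|, by rintro _ ⟨x, rfl⟩; exact abs_le_max_abs_abs (hf x).1 (hf x).2⟩

lemma exists_mem_Icc_of_memℓp_infty (hf : Memℓp f ∞) : ∃ C, ∀ x, f x ∈ Set.Icc (-C) C := by
  obtain ⟨C, hC⟩ := hf.bddAbove
  exact ⟨C, fun x => abs_le.1 (hC ⟨x, rfl⟩)⟩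

lemma memℓp_infty_const (c : ℝ) : Memℓp (fun _ : α => c) ∞ :=
  memℓp_infty_of_mem_Icc fun _ => ⟨le_rfl, le_rfl⟩

lemma memℓp_infty_comp (hf : Memℓp f ∞) (k : β → α) : Memℓp (fun b => f (k b)) ∞ :=
  memℓp_infty (hf.bddAbove.mono (Set.range_comp_subset_range k fun a => ‖f a‖))

lemma memℓp_infty_exp (hf : Memℓp f ∞) : Memℓp (fun a => Real.exp (f a)) ∞ := by
  obtain ⟨C, hC⟩ := exists_mem_Icc_of_memℓp_infty hf
  exact memℓp_infty_of_mem_Icc fun x =>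
    ⟨(Real.exp_pos _).le, Real.exp_le_exp.2 (hC x).2⟩

lemma IsLaw.memℓp_infty (hμ : IsLaw μ) : Memℓp μ ∞ :=
  memℓp_infty_of_mem_Icc fun a => ⟨hμ.nonneg a, hμ.le_one a⟩

lemma IsLaw.summable_mul (hμ : IsLaw μ) (hf : Memℓp f ∞) : Summable fun a => μ a * f a := by
  obtain ⟨C, hC⟩ := hf.bddAbove
  refine Summable.of_norm_bounded (hμ.hasSum_one.summable.mul_right C) fun a => ?_
  rw [norm_mul, Real.norm_of_nonneg (hμ.nonneg a)]
  exact mul_le_mul_of_nonneg_left (hC ⟨a, rfl⟩) (hμ.nonneg a)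

lemma expect_const (hμ : IsLaw μ) (c : ℝ) : expect μ (fun _ => c) = c := by
  rw [expect, tsum_mul_right, hμ.hasSum_one.tsum_eq, one_mul]

lemma expect_add (hμ : IsLaw μ) (hf : Memℓp f ∞) (hg : Memℓp g ∞) :
    expect μ (fun a => f a + g a) = expect μ f + expect μ g := by
  simp only [expect, mul_add]
  exact (hμ.summable_mul hf).tsum_add (hμ.summable_mul hg)

lemma expect_sub (hμ : IsLaw μ) (hf : Memℓp f ∞) (hg : Memℓp g ∞) :
    expect μ (fun a => f a - g a) = expect μ f - expect μ g := by
  simp only [expect, mul_sub]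
  exact (hμ.summable_mul hf).tsum_sub (hμ.summable_mul hg)

lemma expect_const_mul (μ f : α → ℝ) (c : ℝ) : expect μ (fun a => c * f a) = c * expect μ f := by
  simp only [expect, mul_left_comm _ c, tsum_mul_left]

lemma expect_symm (μ f : α → ℝ) : expect μ f = expect f μ := by
  simp only [expect, mul_comm]

lemma expect_single [DecidableEq α] (μ : α → ℝ) (a : α) :
    expect μ (fun b => if b = a then 1 else 0) = μ a := by
  simp [expect]

lemma expect_mono (hμ : IsLaw μ) (hf : Memℓp f ∞) (hg : Memℓp g ∞) (h : ∀ a, f a ≤ g a) :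
    expect μ f ≤ expect μ g :=
  (hμ.summable_mul hf).tsum_le_tsum (fun a => mul_le_mul_of_nonneg_left (h a) (hμ.nonneg a))
    (hμ.summable_mul hg)

lemma expect_mem_Icc (hμ : IsLaw μ) (hf : ∀ x, f x ∈ Set.Icc a b) : expect μ f ∈ Set.Icc a b := by
  have hbdd := memℓp_infty_of_mem_Icc hf
  exact ⟨expect_const hμ a ▸ expect_mono hμ (memℓp_infty_const a) hbdd fun x => (hf x).1,
    expect_const hμ b ▸ expect_mono hμ hbdd (memℓp_infty_const b) fun x => (hf x).2⟩

lemma memℓp_infty_expect {κ : β → α → ℝ} (hκ : ∀ b, IsLaw (κ b)) {F : β × α → ℝ}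
    (hF : Memℓp F ∞) : Memℓp (fun b => expect (κ b) fun a => F (b, a)) ∞ := by
  obtain ⟨C, hC⟩ := exists_mem_Icc_of_memℓp_infty hF
  exact memℓp_infty_of_mem_Icc fun b => expect_mem_Icc (hκ b) fun a => hC (b, a)

lemma sq_expect_le (hμ : IsLaw μ) (hf : Memℓp f ∞) :
    expect μ f ^ 2 ≤ expect μ (fun a => f a ^ 2) := by
  set m := expect μ f with hm
  have hlin : Memℓp (fun a => 2 * m * f a) ∞ := hf.const_mul _
  have tangent : expect μ (fun a => 2 * m * f a - m ^ 2) ≤ expect μ (fun a => f a ^ 2) :=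
    expect_mono hμ (hlin.sub (memℓp_infty_const _)) (hf.infty_pow 2) fun a => by
      linarith [sq_nonneg (f a - m)]
  rw [expect_sub hμ hlin (memℓp_infty_const _), expect_const_mul, expect_const hμ, ← hm] at tangent
  linarith

lemma expect_comp_equiv (e : β ≃ α) (μ f : α → ℝ) :
    expect (μ ∘ e) (f ∘ e) = expect μ f :=
  e.tsum_eq fun a => μ a * f a

lemma expect_indicator_one (μ : α → ℝ) (S : Set α) : expect μ (S.indicator 1) = prob μ S := by
  rw [prob, tsum_subtype, expect]
  congr! with a
  by_cases ha : a ∈ S <;> simp [ha]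

lemma prob_mono (hμ : IsLaw μ) {S T : Set α} (h : S ⊆ T) : prob μ S ≤ prob μ T := by
  rw [prob, prob, tsum_subtype, tsum_subtype]
  exact (hμ.hasSum_one.summable.indicator S).tsum_le_tsum
    (Set.indicator_le_indicator_of_subset h hμ.nonneg) (hμ.hasSum_one.summable.indicator T)

/-- The probability mass function with weights `μ`, through which Mathlib's sub-Gaussian
estimates apply to `expect` and `prob`. -/
def IsLaw.toPMF (hμ : IsLaw μ) : PMF α :=
  ⟨fun a => ENNReal.ofReal (μ a), by
    have h := ENNReal.ofReal_tsum_of_nonneg hμ.nonneg hμ.hasSum_one.summable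
    rw [hμ.hasSum_one.tsum_eq, ENNReal.ofReal_one] at h
    exact h ▸ ENNReal.summable.hasSum⟩

section Integral

variable [MeasurableSpace α] [DiscreteMeasurableSpace α]

lemma IsLaw.integrable_toPMF (hμ : IsLaw μ) (hf : Memℓp f ∞) :
    Integrable f hμ.toPMF.toMeasure := by
  obtain ⟨C, hC⟩ := hf.bddAbove
  exact .of_bound Measurable.of_discrete.aestronglyMeasurable C (.of_forall fun a => hC ⟨a, rfl⟩)

lemma IsLaw.integral_toPMF (hμ : IsLaw μ) (hf : Memℓp f ∞) :
    ∫ a, f a ∂hμ.toPMF.toMeasure = expect μ f := by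
  rw [PMF.integral_eq_tsum _ _ (hμ.integrable_toPMF hf)]
  refine tsum_congr fun a => ?_
  rw [smul_eq_mul]
  congr 1
  exact ENNReal.toReal_ofReal (hμ.nonneg a)

lemma IsLaw.measureReal_toPMF (hμ : IsLaw μ) (S : Set α) :
    hμ.toPMF.toMeasure.real S = prob μ S := by
  rw [← integral_indicator_one .of_discrete, ← expect_indicator_one]
  refine hμ.integral_toPMF (memℓp_infty_of_mem_Icc (a := 0) (b := 1) fun a => ?_)
  by_cases ha : a ∈ S <;> simp [ha]

end Integral

lemma expect_exp_sub_expect_le (hμ : IsLaw μ) (hosc : ∀ x y, f x - f y ≤ c) (t : ℝ) :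
    expect μ (fun a => Real.exp (t * (f a - expect μ f))) ≤ Real.exp (t ^ 2 * c ^ 2 / 8) := by
  let _ : MeasurableSpace α := ⊤
  obtain ⟨x₀⟩ := hμ.nonempty
  have hc : 0 ≤ c := sub_self (f x₀) ▸ hosc x₀ x₀
  have hbelow : BddBelow (Set.range f) :=
    ⟨f x₀ - c, by rintro _ ⟨x, rfl⟩; linarith [hosc x₀ x]⟩
  have hIcc : ∀ x, f x ∈ Set.Icc (⨅ y, f y) ((⨅ y, f y) + c) := fun x =>
    have : Nonempty α := ⟨x⟩
    ⟨ciInf_le hbelow x, sub_le_iff_le_add.1 (le_ciInf fun y => by linarith [hosc x y])⟩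
  have hf := memℓp_infty_of_mem_Icc hIcc
  have hmgf := (hasSubgaussianMGF_of_mem_Icc (μ := hμ.toPMF.toMeasure)
    Measurable.of_discrete.aemeasurable (.of_forall hIcc)).mgf_le t
  have hexp : Memℓp (fun a => Real.exp (t * (f a - expect μ f))) ∞ :=
    memℓp_infty_exp ((hf.sub (memℓp_infty_const _)).const_mul t)
  rw [mgf, hμ.integral_toPMF hf, hμ.integral_toPMF hexp] at hmgf
  refine hmgf.trans_eq (congrArg Real.exp ?_)
  push_cast
  rw [add_sub_cancel_left, Real.norm_of_nonneg hc]
  ring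

lemma prob_expect_add_le_of_expect_exp_le (hμ : IsLaw μ) (hf : Memℓp f ∞) {v ε : ℝ} (hv : 0 ≤ v)
    (hε : 0 ≤ ε)
    (hmgf : ∀ t, expect μ (fun a => Real.exp (t * (f a - expect μ f))) ≤ Real.exp (v * t ^ 2 / 2)) :
    prob μ {a | expect μ f + ε ≤ f a} ≤ Real.exp (-ε ^ 2 / (2 * v)) := by
  let _ : MeasurableSpace α := ⊤
  have hexp : ∀ t, Memℓp (fun a => Real.exp (t * (f a - expect μ f))) ∞ := fun t =>
    memℓp_infty_exp ((hf.sub (memℓp_infty_const _)).const_mul t)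
  have hsub : HasSubgaussianMGF (fun a => f a - expect μ f) ⟨v, hv⟩ hμ.toPMF.toMeasure :=
    ⟨fun t => hμ.integrable_toPMF (hexp t), fun t => (hμ.integral_toPMF (hexp t)).trans_le (hmgf t)⟩
  have htail := hsub.measure_ge_le hε
  simp only [hμ.measureReal_toPMF, le_sub_iff_add_le'] at htail
  exact htail

lemma abs_sub_le_one (hμ : IsLaw μ) (hν : IsLaw ν) (a : α) : |μ a - ν a| ≤ 1 :=
  abs_sub_le_of_nonneg_of_le (hμ.nonneg a) (hμ.le_one a) (hν.nonneg a) (hν.le_one a)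

lemma IsLaw.summable_abs_sub (hμ : IsLaw μ) (hν : IsLaw ν) : Summable fun a => |μ a - ν a| :=
  (hμ.hasSum_one.summable.sub hν.hasSum_one.summable).abs

lemma tv_le_tv_add_tv (hμ : IsLaw μ) (hν : IsLaw ν) (hξ : IsLaw ξ) : tv μ ν ≤ tv μ ξ + tv ν ξ := by
  have h₁ := hμ.summable_abs_sub hξ
  have h₂ := hν.summable_abs_sub hξ
  rw [tv, tv, tv, ← mul_add, ← h₁.tsum_add h₂]
  refine mul_le_mul_of_nonneg_left
    ((hμ.summable_abs_sub hν).tsum_le_tsum (fun a => ?_) (h₁.add h₂)) one_half_pos.le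
  rw [abs_sub_comm (ν a)]
  exact abs_sub_le _ _ _

lemma expect_sub_expect_le_mul_tv (hμ : IsLaw μ) (hν : IsLaw ν) (hf : ∀ x, f x ∈ Set.Icc 0 c) :
    expect μ f - expect ν f ≤ c * tv μ ν := by
  have hbdd := memℓp_infty_of_mem_Icc hf
  have hzero : HasSum (fun a => μ a - ν a) 0 := sub_self (1 : ℝ) ▸ hμ.hasSum_one.sub hν.hasSum_one
  -- `μ - ν` has total mass zero, so `f` may be centred at the midpoint of its range.
  have hcentred : HasSum (fun a => (μ a - ν a) * (f a - c / 2)) (expect μ f - expect ν f) := by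
    have h := ((hμ.summable_mul hbdd).hasSum.sub (hν.summable_mul hbdd).hasSum).sub
      (hzero.mul_right (c / 2))
    rw [zero_mul, sub_zero] at h
    exact h.congr_fun fun a => by ring
  have hbound : HasSum (fun a => |μ a - ν a| * (c / 2)) (c * tv μ ν) := by
    have h := (hμ.summable_abs_sub hν).hasSum.mul_right (c / 2)
    rwa [show (∑' a, |μ a - ν a|) * (c / 2) = c * tv μ ν by rw [tv]; ring] at h
  refine hasSum_le (fun a => ?_) hcentred hbound
  refine (le_abs_self _).trans ?_
  rw [abs_mul]
  refine mul_le_mul_of_nonneg_left (abs_le.2 ⟨?_, ?_⟩) (abs_nonneg _) <;>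
    linarith [(hf a).1, (hf a).2]

/-- The supremum distance `‖μ − ν‖_∞ = sup_a |μ(a) − ν(a)|`, the analogue of `tv`. For laws the
supremum is over a bounded set, hence not a junk value. -/
def supDist (μ ν : α → ℝ) : ℝ := ⨆ a, |μ a - ν a|

lemma abs_sub_le_supDist (hμ : IsLaw μ) (hν : IsLaw ν) (a : α) : |μ a - ν a| ≤ supDist μ ν :=
  le_ciSup (f := fun a => |μ a - ν a|)
    ⟨1, by rintro _ ⟨b, rfl⟩; exact abs_sub_le_one hμ hν b⟩ a

lemma supDist_mem_Icc (hμ : IsLaw μ) (hν : IsLaw ν) : supDist μ ν ∈ Set.Icc 0 1 :=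
  have := hμ.nonempty
  ⟨Real.iSup_nonneg fun _ => abs_nonneg _, ciSup_le (abs_sub_le_one hμ hν)⟩

lemma supDist_le_supDist_add (hμ : IsLaw μ) (hν : IsLaw ν) (h : ∀ a, |ν a - ξ a| ≤ c) :
    supDist μ ξ ≤ supDist μ ν + c :=
  have := hμ.nonempty
  ciSup_le fun a => (abs_sub_le _ (ν a) _).trans (add_le_add (abs_sub_le_supDist hμ hν a) (h a))

lemma supDist_sq_le (hμ : IsLaw μ) (hν : IsLaw ν) :
    supDist μ ν ^ 2 ≤ expect μ μ - 2 * expect ν μ + expect ν ν := by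
  have hsq : HasSum (fun a => (μ a - ν a) ^ 2) (expect μ μ - 2 * expect ν μ + expect ν ν) := by
    have h := ((hμ.summable_mul hμ.memℓp_infty).hasSum.sub
      ((hν.summable_mul hμ.memℓp_infty).hasSum.mul_left 2)).add
      (hν.summable_mul hν.memℓp_infty).hasSum
    exact h.congr_fun fun a => by ring
  have hterm : ∀ a, (μ a - ν a) ^ 2 ≤ expect μ μ - 2 * expect ν μ + expect ν ν := fun a =>
    le_hasSum hsq a fun b _ => sq_nonneg _
  have := hμ.nonempty
  rw [← Real.le_sqrt (supDist_mem_Icc hμ hν).1 (hsq.nonneg fun a => sq_nonneg _)]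
  exact ciSup_le fun a => Real.abs_le_sqrt (hterm a)

end Laws

section Mixture

variable {α β : Type*} {μ : α → ℝ} {κ : α → β → ℝ}

/-- The law of a pair whose first coordinate has law `μ` and whose second coordinate has
conditional law `κ a` given that the first one is `a`. -/
def jointLaw (μ : α → ℝ) (κ : α → β → ℝ) (z : α × β) : ℝ := μ z.1 * κ z.1 z.2

/-- The law of the second coordinate under `jointLaw μ κ`. -/
def mixture (μ : α → ℝ) (κ : α → β → ℝ) (b : β) : ℝ := ∑' a, μ a * κ a b

lemma isLaw_jointLaw (hμ : IsLaw μ) (hκ : ∀ a, IsLaw (κ a)) : IsLaw (jointLaw μ κ) := by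
  have hnonneg : 0 ≤ jointLaw μ κ := fun z => mul_nonneg (hμ.nonneg _) ((hκ _).nonneg _)
  have hfiber : ∀ a, HasSum (fun b => jointLaw μ κ (a, b)) (μ a) := fun a =>
    mul_one (μ a) ▸ (hκ a).hasSum_one.mul_left (μ a)
  have hsum : Summable (jointLaw μ κ) := (summable_prod_of_nonneg hnonneg).2
    ⟨fun a => (hfiber a).summable, by simpa only [(hfiber _).tsum_eq] using hμ.hasSum_one.summable⟩
  refine ⟨hnonneg, ?_⟩
  rw [← (hsum.hasSum.prod_fiberwise hfiber).unique hμ.hasSum_one]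
  exact hsum.hasSum

lemma expect_jointLaw (hμ : IsLaw μ) (hκ : ∀ a, IsLaw (κ a)) {g : α × β → ℝ} (hg : Memℓp g ∞) :
    expect (jointLaw μ κ) g = expect μ fun a => expect (κ a) fun b => g (a, b) := by
  rw [expect, ((isLaw_jointLaw hμ hκ).summable_mul hg).tsum_prod]
  simp only [expect, jointLaw, mul_assoc, tsum_mul_left]

lemma isLaw_mixture (hμ : IsLaw μ) (hκ : ∀ a, IsLaw (κ a)) : IsLaw (mixture μ κ) := by
  have hjoint := isLaw_jointLaw hμ hκ
  have hswap : HasSum (fun z : β × α => jointLaw μ κ z.swap) 1 :=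
    (Equiv.prodComm β α).hasSum_iff.2 hjoint.hasSum_one
  exact ⟨fun b => tsum_nonneg fun a => hjoint.nonneg (a, b),
    hswap.prod_fiberwise fun b => (hswap.summable.prod_factor b).hasSum⟩

lemma expect_mixture (hμ : IsLaw μ) (hκ : ∀ a, IsLaw (κ a)) {g : β → ℝ} (hg : Memℓp g ∞) :
    expect (mixture μ κ) g = expect μ fun a => expect (κ a) g := by
  have hsum := (isLaw_jointLaw hμ hκ).summable_mul (memℓp_infty_comp hg Prod.snd)
  have hcomm := Summable.tsum_comm (f := fun a b => μ a * κ a b * g b) hsum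
  simpa only [expect, mixture, mul_assoc, tsum_mul_left, ← tsum_mul_right] using hcomm

end Mixture

section Kernel

variable {A : ℕ → ℕ → ℝ} {p q u : ℕ → ℝ}

lemma kerApp_eq_mixture (A : ℕ → ℕ → ℝ) (p : ℕ → ℝ) :
    kerApp A p = mixture p fun x y => A y x :=
  funext fun _ => tsum_congr fun _ => mul_comm _ _

lemma isLaw_kerApp (hA : IsKernel A) (hp : IsLaw p) : IsLaw (kerApp A p) :=
  kerApp_eq_mixture A p ▸ isLaw_mixture hp hA.isLaw

lemma expect_kerApp (hA : IsKernel A) (hp : IsLaw p) (hu : Memℓp u ∞) :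
    expect (kerApp A p) u = expect p fun x => expect (A · x) u := by
  rw [kerApp_eq_mixture, expect_mixture hp hA.isLaw hu]

lemma kerApp_sub_kerApp_le_tv (hA : IsKernel A) (hp : IsLaw p) (hq : IsLaw q) (y : ℕ) :
    kerApp A p y - kerApp A q y ≤ tv p q := by
  have h := expect_sub_expect_le_mul_tv (f := A y) hp hq fun x =>
    ⟨hA.1 y x, (hA.isLaw x).le_one y⟩
  rwa [expect_symm p, expect_symm q, one_mul] at h

lemma isLaw_kerIter (hA : IsKernel A) (hp : IsLaw p) : ∀ k, IsLaw (kerIter A k p)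
  | 0 => hp
  | k + 1 => isLaw_kerApp hA (isLaw_kerIter hA hp k)

lemma kerIter_kerApp (A : ℕ → ℕ → ℝ) (p : ℕ → ℝ) :
    ∀ k, kerIter A k (kerApp A p) = kerIter A (k + 1) p
  | 0 => rfl
  | k + 1 => congrArg (kerApp A) (kerIter_kerApp A p k)

lemma kerIter_eq_self (hp : kerApp A p = p) : ∀ k, kerIter A k p = p
  | 0 => rfl
  | k + 1 => (congrArg (kerApp A) (kerIter_eq_self hp k)).trans hp

lemma kerApp_dirac (A : ℕ → ℕ → ℝ) (x : ℕ) : kerApp A (dirac x) = (A · x) := by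
  ext y
  simp [kerApp, dirac]

end Kernel

section HMM

variable {A B : ℕ → ℕ → ℝ} {p : ℕ → ℝ} {n : ℕ}

lemma markovLaw_comp_consEquiv (p : ℕ → ℝ) (A : ℕ → ℕ → ℝ) (n : ℕ) :
    markovLaw p A (n + 1) ∘ Fin.consEquiv (fun _ => ℕ) =
      jointLaw p fun x => markovLaw (A · x) A n := by
  ext ⟨x, xs⟩
  cases n with
  | zero => simp [markovLaw, jointLaw]
  | succ n =>
    simp [markovLaw, jointLaw, Fin.consEquiv, Fin.prod_univ_succ (n := n)]

lemma isLaw_markovLaw (hA : IsKernel A) (hp : IsLaw p) : IsLaw (markovLaw p A n) := by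
  induction n generalizing p with
  | zero => exact isLaw_const_one
  | succ n ih =>
    refine .of_comp_equiv (Fin.consEquiv fun _ => ℕ) ?_
    rw [markovLaw_comp_consEquiv]
    exact isLaw_jointLaw hp fun x => ih (hA.isLaw x)

lemma summable_markovLaw_mul_prod (hA : IsKernel A) (hB : IsKernel B) (hp : IsLaw p)
    (y : Fin n → ℕ) : Summable fun x => markovLaw p A n x * ∏ i, B (y i) (x i) :=
  (isLaw_markovLaw hA hp).summable_mul <| memℓp_infty_of_mem_Icc fun x =>
    ⟨Finset.prod_nonneg fun i _ => hB.1 (y i) (x i),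
      Finset.prod_le_one (fun i _ => hB.1 (y i) (x i)) fun i _ => (hB.isLaw (x i)).le_one (y i)⟩

lemma hmmLaw_zero (p : ℕ → ℝ) (A B : ℕ → ℕ → ℝ) : hmmLaw p A B 0 = fun _ => 1 := by
  ext y
  simp [hmmLaw, markovLaw]

lemma hmmLaw_comp_consEquiv (hA : IsKernel A) (hB : IsKernel B) (hp : IsLaw p) :
    hmmLaw p A B (n + 1) ∘ Fin.consEquiv (fun _ => ℕ) =
      mixture p fun x => jointLaw (B · x) fun _ => hmmLaw (A · x) A B n := by
  ext ⟨y, ys⟩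
  let e := Fin.consEquiv fun _ : Fin (n + 1) => ℕ
  have hsum := e.summable_iff.2 (summable_markovLaw_mul_prod hA hB hp (e (y, ys)))
  refine (e.tsum_eq _).symm.trans (hsum.tsum_prod.trans (tsum_congr fun x => ?_))
  simp only [jointLaw, hmmLaw, ← tsum_mul_left]
  refine tsum_congr fun xs => ?_
  have hmarkov := congrFun (markovLaw_comp_consEquiv p A n) (x, xs)
  simp only [Function.comp_apply, jointLaw] at hmarkov ⊢
  rw [hmarkov, Fin.prod_univ_succ]
  simp only [e, Fin.consEquiv_apply, Fin.cons_zero, Fin.cons_succ]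
  ring

lemma isLaw_hmmLaw (hA : IsKernel A) (hB : IsKernel B) (hp : IsLaw p) :
    IsLaw (hmmLaw p A B n) := by
  induction n generalizing p with
  | zero => exact hmmLaw_zero p A B ▸ isLaw_const_one
  | succ n ih =>
    refine .of_comp_equiv (Fin.consEquiv fun _ => ℕ) ?_
    rw [hmmLaw_comp_consEquiv hA hB hp]
    exact isLaw_mixture hp fun x => isLaw_jointLaw (hB.isLaw x) fun _ => ih (hA.isLaw x)

lemma expect_hmmLaw_zero (p : ℕ → ℝ) (A B : ℕ → ℕ → ℝ) (g : (Fin 0 → ℕ) → ℝ) :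
    expect (hmmLaw p A B 0) g = g default := by
  simp only [expect, hmmLaw_zero, one_mul, tsum_fintype, Fintype.sum_unique]
  exact congrArg g (Subsingleton.elim _ _)

/-- The conditional expectation of `g (Y₁, …, Yₙ₊₁)` given `(X₁, Y₁) = z`, in the hidden Markov
chain with transition kernel `A` and emission kernel `B`. -/
def condMean (A B : ℕ → ℕ → ℝ) (g : (Fin (n + 1) → ℕ) → ℝ) (z : ℕ × ℕ) : ℝ :=
  expect (hmmLaw (A · z.1) A B n) fun ys => g (Fin.cons z.2 ys)

lemma memℓp_infty_condMean (hA : IsKernel A) (hB : IsKernel B) {g : (Fin (n + 1) → ℕ) → ℝ}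
    (hg : Memℓp g ∞) : Memℓp (condMean A B g) ∞ :=
  memℓp_infty_expect (fun z : ℕ × ℕ => isLaw_hmmLaw hA hB (hA.isLaw z.1))
    (F := fun w => g (Fin.cons w.1.2 w.2)) (memℓp_infty_comp hg _)

lemma expect_hmmLaw_succ (hA : IsKernel A) (hB : IsKernel B) (hp : IsLaw p)
    {g : (Fin (n + 1) → ℕ) → ℝ} (hg : Memℓp g ∞) :
    expect (hmmLaw p A B (n + 1)) g =
      expect p fun x => expect (B · x) fun y => condMean A B g (x, y) := by
  let e := Fin.consEquiv fun _ : Fin (n + 1) => ℕ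
  have htail : ∀ x, IsLaw (hmmLaw (A · x) A B n) := fun x => isLaw_hmmLaw hA hB (hA.isLaw x)
  have hge : Memℓp (g ∘ e) ∞ := memℓp_infty_comp hg e
  rw [← expect_comp_equiv e, hmmLaw_comp_consEquiv hA hB hp,
    expect_mixture hp (fun x => isLaw_jointLaw (hB.isLaw x) fun _ => htail x) hge]
  exact tsum_congr fun x => congrArg (p x * ·) (expect_jointLaw (hB.isLaw x) (fun _ => htail x) hge)

lemma expect_hmmLaw_succ_eq_expect_jointLaw (hA : IsKernel A) (hB : IsKernel B)
    (hp : IsLaw p) {g : (Fin (n + 1) → ℕ) → ℝ} (hg : Memℓp g ∞) :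
    expect (hmmLaw p A B (n + 1)) g = expect (jointLaw p fun x y => B y x) (condMean A B g) := by
  rw [expect_hmmLaw_succ hA hB hp hg, expect_jointLaw hp hB.isLaw (memℓp_infty_condMean hA hB hg)]

lemma expect_hmmLaw_kerApp (hA : IsKernel A) (hB : IsKernel B) (hp : IsLaw p)
    {g : (Fin n → ℕ) → ℝ} (hg : Memℓp g ∞) :
    expect (hmmLaw (kerApp A p) A B n) g = expect p fun x => expect (hmmLaw (A · x) A B n) g := by
  cases n with
  | zero => simp only [expect_hmmLaw_zero, expect_const hp]
  | succ n =>
    rw [expect_hmmLaw_succ hA hB (isLaw_kerApp hA hp) hg, expect_kerApp hA hp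
      (memℓp_infty_expect hB.isLaw (memℓp_infty_condMean hA hB hg))]
    simp only [expect_hmmLaw_succ hA hB (hA.isLaw _) hg]

lemma expect_hmmLaw_tail (hA : IsKernel A) (hB : IsKernel B) (hp : IsLaw p)
    {g : (Fin n → ℕ) → ℝ} (hg : Memℓp g ∞) :
    expect (hmmLaw p A B (n + 1)) (fun Y => g (Fin.tail Y)) =
      expect (hmmLaw (kerApp A p) A B n) g := by
  rw [expect_hmmLaw_succ hA hB hp (memℓp_infty_comp hg _), expect_hmmLaw_kerApp hA hB hp hg]
  simp only [condMean, Fin.tail_cons, expect_const (hB.isLaw _)]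

end HMM

section BoundedDifferences

variable {α : Type*} {n : ℕ} {L : ℝ}

/-- The bounded differences condition of McDiarmid's inequality: changing one coordinate changes
`g` by at most `L`. One inequality suffices, as the change can be undone. -/
def BoundedDifferences (L : ℝ) (g : (Fin n → α) → ℝ) : Prop :=
  ∀ Y i v, g (Function.update Y i v) ≤ g Y + L

/-- The infimum of `g` over its first coordinate, as a function of the others. -/
def headInf (g : (Fin (n + 1) → α) → ℝ) (ys : Fin n → α) : ℝ := ⨅ y, g (Fin.cons y ys)

variable {g : (Fin (n + 1) → α) → ℝ}

lemma BoundedDifferences.comp_cons (hL : BoundedDifferences L g) (y : α) :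
    BoundedDifferences L fun ys : Fin n → α => g (Fin.cons y ys) := fun ys i v => by
  simpa only [Fin.cons_update] using hL (Fin.cons y ys) i.succ v

lemma BoundedDifferences.cons_le (hL : BoundedDifferences L g) (y z : α) (ys : Fin n → α) :
    g (Fin.cons y ys) ≤ g (Fin.cons z ys) + L := by
  simpa only [Fin.update_cons_zero] using hL (Fin.cons z ys) 0 y

lemma BoundedDifferences.nonneg [Nonempty α] (hL : BoundedDifferences L g) : 0 ≤ L := by
  obtain ⟨y⟩ := ‹Nonempty α›
  exact nonneg_of_le_add_right (hL.cons_le y y fun _ => y)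

lemma headInf_le_cons (hg : Memℓp g ∞) (y : α) (ys : Fin n → α) :
    headInf g ys ≤ g (Fin.cons y ys) := by
  obtain ⟨C, hC⟩ := exists_mem_Icc_of_memℓp_infty hg
  exact ciInf_le ⟨-C, by rintro _ ⟨z, rfl⟩; exact (hC _).1⟩ y

lemma BoundedDifferences.cons_le_headInf_add (hL : BoundedDifferences L g) (y : α)
    (ys : Fin n → α) : g (Fin.cons y ys) ≤ headInf g ys + L :=
  have : Nonempty α := ⟨y⟩
  sub_le_iff_le_add.1 (le_ciInf fun z => sub_le_iff_le_add.2 (hL.cons_le y z ys))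

variable [Nonempty α]

lemma memℓp_infty_headInf (hg : Memℓp g ∞) : Memℓp (headInf g) ∞ := by
  obtain ⟨C, hC⟩ := exists_mem_Icc_of_memℓp_infty hg
  obtain ⟨y⟩ := ‹Nonempty α›
  exact memℓp_infty_of_mem_Icc fun ys =>
    ⟨le_ciInf fun z => (hC _).1, (headInf_le_cons hg y ys).trans (hC _).2⟩

lemma BoundedDifferences.headInf (hL : BoundedDifferences L g) (hg : Memℓp g ∞) :
    BoundedDifferences L (headInf g) := fun ys i v =>
  sub_le_iff_le_add.1 <| le_ciInf fun y => sub_le_iff_le_add.2 <|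
    (headInf_le_cons hg y _).trans (hL.comp_cons y ys i v)

end BoundedDifferences

section McDiarmid

variable {A B : ℕ → ℕ → ℝ} {p q : ℕ → ℝ} {n : ℕ} {L Δ : ℝ}

lemma expect_hmmLaw_sub_headInf_sub_le (hA : IsKernel A) (hB : IsKernel B) (hp : IsLaw p)
    (hq : IsLaw q) {g : (Fin (n + 1) → ℕ) → ℝ} (hg : Memℓp g ∞) (hL : BoundedDifferences L g) :
    expect (hmmLaw p A B (n + 1)) (fun Y => g Y - headInf g (Fin.tail Y)) -
      expect (hmmLaw q A B (n + 1)) (fun Y => g Y - headInf g (Fin.tail Y)) ≤ L * tv p q := by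
  have hbdd : Memℓp (fun Y => g Y - headInf g (Fin.tail Y)) ∞ :=
    hg.sub (memℓp_infty_comp (memℓp_infty_headInf hg) _)
  rw [expect_hmmLaw_succ hA hB hp hbdd, expect_hmmLaw_succ hA hB hq hbdd]
  refine expect_sub_expect_le_mul_tv hp hq fun x => expect_mem_Icc (hB.isLaw x) fun y =>
    expect_mem_Icc (isLaw_hmmLaw hA hB (hA.isLaw x)) fun ys => ?_
  simp only [Fin.tail_cons]
  exact ⟨sub_nonneg.2 (headInf_le_cons hg y ys),
    sub_le_iff_le_add'.2 (hL.cons_le_headInf_add y ys)⟩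

-- Subtracting `headInf g` leaves a remainder ranging in `[0, L]` rather than `[-L, L]`, which saves
-- a factor of two for the first coordinate; the recursion then treats `headInf g` itself.
lemma expect_hmmLaw_sub_expect_hmmLaw_le (hA : IsKernel A) (hB : IsKernel B) (hp : IsLaw p)
    (hq : IsLaw q) {g : (Fin n → ℕ) → ℝ} (hg : Memℓp g ∞) (hL : BoundedDifferences L g) :
    expect (hmmLaw p A B n) g - expect (hmmLaw q A B n) g ≤
      L * ∑ k ∈ Finset.range n, tv (kerIter A k p) (kerIter A k q) := by
  induction n generalizing p q with
  | zero => simp [expect_hmmLaw_zero]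
  | succ n ih =>
    have hinf := memℓp_infty_headInf hg
    have split : ∀ {r}, IsLaw r → expect (hmmLaw r A B (n + 1)) (fun Y => g Y -
        headInf g (Fin.tail Y)) = expect (hmmLaw r A B (n + 1)) g -
          expect (hmmLaw (kerApp A r) A B n) (headInf g) := fun hr => by
      rw [expect_sub (isLaw_hmmLaw hA hB hr) hg (memℓp_infty_comp hinf _),
        expect_hmmLaw_tail hA hB hr hinf]
    have hhead := expect_hmmLaw_sub_headInf_sub_le hA hB hp hq hg hL
    have htail := ih (isLaw_kerApp hA hp) (isLaw_kerApp hA hq) hinf (hL.headInf hg)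
    rw [split hp, split hq] at hhead
    simp only [kerIter_kerApp] at htail
    rw [Finset.sum_range_succ', mul_add, kerIter, kerIter]
    linarith

lemma condMean_sub_condMean_le (hA : IsKernel A) (hB : IsKernel B)
    {g : (Fin (n + 1) → ℕ) → ℝ} (hg : Memℓp g ∞) (hL : BoundedDifferences L g) (z w : ℕ × ℕ) :
    condMean A B g z - condMean A B g w ≤
      L * (1 + ∑ k ∈ Finset.range n, tv (kerIter A k (A · z.1)) (kerIter A k (A · w.1))) := by
  have hgc : ∀ y, Memℓp (fun ys => g (Fin.cons y ys)) ∞ := fun y => memℓp_infty_comp hg _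
  have hlaw := isLaw_hmmLaw (n := n) hA hB (hA.isLaw w.1)
  have hhidden := expect_hmmLaw_sub_expect_hmmLaw_le hA hB (hA.isLaw z.1) (hA.isLaw w.1)
    (hgc z.2) (hL.comp_cons z.2)
  have hvisible := expect_mono (g := fun ys => g (Fin.cons w.2 ys) + L) hlaw (hgc z.2)
    ((hgc w.2).add (memℓp_infty_const L)) (hL.cons_le z.2 w.2)
  rw [expect_add hlaw (hgc w.2) (memℓp_infty_const L), expect_const hlaw] at hvisible
  simp only [condMean]
  linarith

lemma condMean_exp_sub (A B : ℕ → ℕ → ℝ) (g : (Fin (n + 1) → ℕ) → ℝ) (t m : ℝ) (z : ℕ × ℕ) :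
    condMean A B (fun Y => Real.exp (t * (g Y - m))) z =
      expect (hmmLaw (A · z.1) A B n)
        (fun ys => Real.exp (t * (g (Fin.cons z.2 ys) - condMean A B g z))) *
          Real.exp (t * (condMean A B g z - m)) := by
  rw [mul_comm, ← expect_const_mul, condMean]
  refine congrArg (expect _) (funext fun ys => ?_)
  rw [← Real.exp_add]
  ring_nf

lemma expect_exp_hmmLaw_le (hA : IsKernel A) (hB : IsKernel B) (hp : IsLaw p)
    (hΔ : ∀ m x y, 1 + ∑ k ∈ Finset.range m, tv (kerIter A k (A · x)) (kerIter A k (A · y)) ≤ Δ)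
    {g : (Fin n → ℕ) → ℝ} (hg : Memℓp g ∞) (hL : BoundedDifferences L g) (t : ℝ) :
    expect (hmmLaw p A B n) (fun Y => Real.exp (t * (g Y - expect (hmmLaw p A B n) g))) ≤
      Real.exp (n * (t ^ 2 * (L * Δ) ^ 2 / 8)) := by
  induction n generalizing p with
  | zero => simp [expect_hmmLaw_zero]
  | succ n ih =>
    set m := expect (hmmLaw p A B (n + 1)) g with hm
    have hexp : ∀ {β : Type} {f : β → ℝ}, Memℓp f ∞ →
        Memℓp (fun b => Real.exp (t * (f b - m))) ∞ := fun hf =>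
      memℓp_infty_exp ((hf.sub (memℓp_infty_const m)).const_mul t)
    have hcond := memℓp_infty_condMean hA hB hg
    have hfirst := isLaw_jointLaw hp hB.isLaw
    have hrest : ∀ z, condMean A B (fun Y => Real.exp (t * (g Y - m))) z ≤
        Real.exp (n * (t ^ 2 * (L * Δ) ^ 2 / 8)) * Real.exp (t * (condMean A B g z - m)) :=
      fun z => condMean_exp_sub A B g t m z ▸ mul_le_mul_of_nonneg_right
        (ih (hA.isLaw z.1) (memℓp_infty_comp hg _) (hL.comp_cons z.2)) (Real.exp_pos _).le
    calc expect (hmmLaw p A B (n + 1)) (fun Y => Real.exp (t * (g Y - m)))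
        ≤ expect (jointLaw p fun x y => B y x) fun z =>
            Real.exp (n * (t ^ 2 * (L * Δ) ^ 2 / 8)) * Real.exp (t * (condMean A B g z - m)) := by
          rw [expect_hmmLaw_succ_eq_expect_jointLaw hA hB hp (hexp hg)]
          exact expect_mono hfirst (memℓp_infty_condMean hA hB (hexp hg))
            ((hexp hcond).const_mul _) hrest
      _ ≤ Real.exp (n * (t ^ 2 * (L * Δ) ^ 2 / 8)) * Real.exp (t ^ 2 * (L * Δ) ^ 2 / 8) := by
          rw [expect_const_mul, hm, expect_hmmLaw_succ_eq_expect_jointLaw hA hB hp hg]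
          exact mul_le_mul_of_nonneg_left (expect_exp_sub_expect_le hfirst (fun z w =>
            (condMean_sub_condMean_le hA hB hg hL z w).trans
              (mul_le_mul_of_nonneg_left (hΔ n z.1 w.1) hL.nonneg)) t) (Real.exp_pos _).le
      _ = Real.exp ((n + 1 : ℕ) * (t ^ 2 * (L * Δ) ^ 2 / 8)) := by
          rw [← Real.exp_add]
          push_cast
          ring_nf

lemma prob_hmmLaw_expect_add_le (hA : IsKernel A) (hB : IsKernel B) (hp : IsLaw p)
    (hΔ : ∀ m x y, 1 + ∑ k ∈ Finset.range m, tv (kerIter A k (A · x)) (kerIter A k (A · y)) ≤ Δ)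
    {g : (Fin n → ℕ) → ℝ} (hg : Memℓp g ∞) (hL : BoundedDifferences L g) {ε : ℝ} (hε : 0 ≤ ε) :
    prob (hmmLaw p A B n) {Y | expect (hmmLaw p A B n) g + ε ≤ g Y} ≤
      Real.exp (-(2 * ε ^ 2) / (n * (L * Δ) ^ 2)) := by
  refine (prob_expect_add_le_of_expect_exp_le (isLaw_hmmLaw hA hB hp) hg
    (v := n * (L * Δ) ^ 2 / 4) (by positivity) hε fun t => ?_).trans_eq ?_
  · exact (expect_exp_hmmLaw_le hA hB hp hΔ hg hL t).trans_eq (by ring_nf)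
  · rw [show 2 * (n * (L * Δ) ^ 2 / 4) = n * (L * Δ) ^ 2 / 2 by ring, div_div_eq_mul_div]
    ring_nf

end McDiarmid

section GeometricErgodicity

variable {A : ℕ → ℕ → ℝ} {π : ℕ → ℝ} {G θ : ℝ}

lemma sum_range_pow_succ_le (hθ₀ : 0 ≤ θ) (hθ₁ : θ < 1) (n : ℕ) :
    ∑ k ∈ Finset.range n, θ ^ (k + 1) ≤ θ / (1 - θ) := by
  have hgeom := (hasSum_geometric_of_lt_one hθ₀ hθ₁).mul_left θ
  simp only [← pow_succ', ← div_eq_mul_inv] at hgeom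
  exact sum_le_hasSum _ (fun k _ => pow_nonneg hθ₀ _) hgeom

lemma IsGeomErgodic.tv_kerIter_le (hge : IsGeomErgodic A π G θ) (k x : ℕ) :
    tv (kerIter A k (A · x)) π ≤ G * θ ^ (k + 1) := by
  obtain ⟨-, -, -, -, -, hmix⟩ := hge
  rw [← kerApp_dirac, kerIter_kerApp]
  exact hmix (k + 1) x

lemma IsGeomErgodic.sum_tv_kerIter_le (hge : IsGeomErgodic A π G θ) (n x : ℕ) :
    ∑ k ∈ Finset.range n, tv (kerIter A k (A · x)) π ≤ G * (θ / (1 - θ)) := by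
  have ⟨hG, hθ₀, hθ₁, _⟩ := hge
  refine (Finset.sum_le_sum fun k _ => hge.tv_kerIter_le k x).trans ?_
  rw [← Finset.mul_sum]
  exact mul_le_mul_of_nonneg_left (sum_range_pow_succ_le hθ₀ hθ₁ n) (zero_le_one.trans hG)

lemma IsGeomErgodic.one_add_sum_tv_le (hA : IsKernel A) (hge : IsGeomErgodic A π G θ)
    (n x y : ℕ) :
    1 + ∑ k ∈ Finset.range n, tv (kerIter A k (A · x)) (kerIter A k (A · y)) ≤
      2 * G / (1 - θ) := by
  have ⟨hG, _, hθ₁, hπ, _⟩ := hge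
  have hlaw := fun z k => isLaw_kerIter hA (hA.isLaw z) k
  have htriangle := Finset.sum_le_sum fun k (_ : k ∈ Finset.range n) =>
    tv_le_tv_add_tv (hlaw x k) (hlaw y k) hπ.isLaw
  rw [Finset.sum_add_distrib] at htriangle
  have hθ : 0 < 1 - θ := sub_pos.2 hθ₁
  calc _ ≤ 1 + 2 * (G * (θ / (1 - θ))) := by
        linarith [hge.sum_tv_kerIter_le n x, hge.sum_tv_kerIter_le n y]
    _ = 2 * G / (1 - θ) - (2 * G - 1) := by
        field_simp
        ring
    _ ≤ 2 * G / (1 - θ) := by linarith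

end GeometricErgodicity

section Empirical

variable {n : ℕ} {ρ : ℕ → ℝ}

lemma hasSum_emp_mul (Y : Fin n → ℕ) (u : ℕ → ℝ) :
    HasSum (fun v => emp Y v * u v) ((∑ i, u (Y i)) / n) := by
  have hterm : ∀ i, HasSum (fun v => if Y i = v then u v else 0) (u (Y i)) := fun i => by
    simpa using hasSum_single (f := fun v => if Y i = v then u v else 0) (Y i) fun v hv =>
      if_neg hv.symm
  refine ((hasSum_sum fun i _ => hterm i).div_const (n : ℝ)).congr_fun fun v => ?_
  simp only [emp, div_mul_eq_mul_div, Finset.sum_mul, ite_mul, one_mul, zero_mul]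

lemma isLaw_emp (hn : 0 < n) (Y : Fin n → ℕ) : IsLaw (emp Y) := by
  refine ⟨fun v => by unfold emp; positivity, ?_⟩
  simpa [hn.ne'] using hasSum_emp_mul Y 1

lemma abs_emp_sub_emp_update_le (Y : Fin n → ℕ) (i : Fin n) (v w : ℕ) :
    |emp Y w - emp (Function.update Y i v) w| ≤ 1 / n := by
  rw [emp, emp, ← sub_div, abs_div, Nat.abs_cast, ← Finset.sum_sub_distrib,
    Finset.sum_eq_single_of_mem i (Finset.mem_univ i) fun j _ hj => by
      rw [Function.update_of_ne hj, sub_self], Function.update_self]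
  refine div_le_div_of_nonneg_right ?_ n.cast_nonneg
  split_ifs <;> norm_num

lemma boundedDifferences_supDist_emp (hn : 0 < n) (hρ : IsLaw ρ) :
    BoundedDifferences (1 / n) fun Y : Fin n → ℕ => supDist ρ (emp Y) := fun Y i v =>
  supDist_le_supDist_add hρ (isLaw_emp hn Y) (abs_emp_sub_emp_update_le Y i v)

lemma memℓp_infty_supDist_emp (hn : 0 < n) (hρ : IsLaw ρ) :
    Memℓp (fun Y : Fin n → ℕ => supDist ρ (emp Y)) ∞ :=
  memℓp_infty_of_mem_Icc fun Y => supDist_mem_Icc hρ (isLaw_emp hn Y)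

lemma memℓp_infty_sum {u : ℕ → ℝ} (hu : Memℓp u ∞) :
    Memℓp (fun Y : Fin n → ℕ => ∑ i, u (Y i)) ∞ := by
  simpa only [Finset.sum_apply] using Memℓp.finsetSum Finset.univ
    (f := fun i (Y : Fin n → ℕ) => u (Y i)) fun i _ => memℓp_infty_comp hu _

/-- The number of times that `v` occurs in the sample `Y`. -/
def occurrences (v : ℕ) (Y : Fin n → ℕ) : ℝ := ∑ i, if Y i = v then 1 else 0

/-- The number of pairs `(i, j)` with `Y i = Y j`, that is `n² ∑ᵥ (emp Y v)²`. -/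
def coincidences (Y : Fin n → ℕ) : ℝ := ∑ i, occurrences (Y i) Y

lemma supDist_emp_sq_le (hn : 0 < n) (hρ : IsLaw ρ) (Y : Fin n → ℕ) :
    supDist ρ (emp Y) ^ 2 ≤ expect ρ ρ - 2 / n * ∑ i, ρ (Y i) + 1 / n ^ 2 * coincidences Y := by
  refine (supDist_sq_le hρ (isLaw_emp hn Y)).trans_eq ?_
  have hcoin : ∑ i, emp Y (Y i) = coincidences Y / n := (Finset.sum_div _ _ _).symm
  rw [expect, expect, expect, (hasSum_emp_mul Y _).tsum_eq, (hasSum_emp_mul Y _).tsum_eq, hcoin]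
  ring

lemma occurrences_succ (v : ℕ) (Y : Fin (n + 1) → ℕ) :
    occurrences v Y = (if Y 0 = v then 1 else 0) + occurrences v (Fin.tail Y) :=
  Fin.sum_univ_succ _

lemma coincidences_succ (Y : Fin (n + 1) → ℕ) :
    coincidences Y = 1 + 2 * occurrences (Y 0) (Fin.tail Y) + coincidences (Fin.tail Y) := by
  have hhead : ∑ i : Fin n, (if Y 0 = Y i.succ then 1 else 0) = occurrences (Y 0) (Fin.tail Y) :=
    Finset.sum_congr rfl fun i _ => if_congr eq_comm rfl rfl
  have htail : ∑ i : Fin n, occurrences (Y i.succ) (Fin.tail Y) = coincidences (Fin.tail Y) := rfl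
  rw [coincidences, Fin.sum_univ_succ]
  simp only [occurrences_succ _ Y, Finset.sum_add_distrib, hhead, htail, if_true]
  ring

lemma occurrences_mem_Icc (v : ℕ) (Y : Fin n → ℕ) : occurrences v Y ∈ Set.Icc (0 : ℝ) n := by
  refine ⟨by unfold occurrences; positivity, ?_⟩
  rw [occurrences, Finset.sum_boole]
  exact_mod_cast (Finset.card_le_univ _).trans_eq (Fintype.card_fin n)

lemma memℓp_infty_coincidences : Memℓp (coincidences (n := n)) ∞ :=
  memℓp_infty_of_mem_Icc fun Y =>
    ⟨Finset.sum_nonneg fun i _ => (occurrences_mem_Icc (Y i) Y).1,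
      Finset.sum_le_card_nsmul _ _ _ fun i _ => (occurrences_mem_Icc (Y i) Y).2⟩

end Empirical

section SecondMoment

variable {A B : ℕ → ℕ → ℝ} {p π : ℕ → ℝ} {u : ℕ → ℝ} {G θ : ℝ} {n : ℕ}

lemma expect_hmmLaw_head (hA : IsKernel A) (hB : IsKernel B) (hp : IsLaw p) (hu : Memℓp u ∞) :
    expect (hmmLaw p A B (n + 1)) (fun Y => u (Y 0)) = expect (kerApp B p) u := by
  rw [expect_hmmLaw_succ hA hB hp (memℓp_infty_comp hu _), expect_kerApp hB hp hu]
  simp only [condMean, Fin.cons_zero, expect_const (isLaw_hmmLaw hA hB (hA.isLaw _))]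

lemma expect_hmmLaw_sum (hA : IsKernel A) (hB : IsKernel B) (hp : IsLaw p) (hu : Memℓp u ∞) :
    expect (hmmLaw p A B n) (fun Y => ∑ i, u (Y i)) =
      ∑ k ∈ Finset.range n, expect (kerApp B (kerIter A k p)) u := by
  induction n generalizing p with
  | zero => simp [expect_hmmLaw_zero]
  | succ n ih =>
    have hsum := memℓp_infty_sum (n := n) hu
    calc expect (hmmLaw p A B (n + 1)) (fun Y => ∑ i, u (Y i))
        = expect (hmmLaw p A B (n + 1)) (fun Y => u (Y 0) + ∑ i, u (Fin.tail Y i)) := by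
          simp only [Fin.sum_univ_succ, Fin.tail]
      _ = expect (kerApp B p) u +
            ∑ k ∈ Finset.range n, expect (kerApp B (kerIter A k (kerApp A p))) u := by
          rw [expect_add (isLaw_hmmLaw hA hB hp) (memℓp_infty_comp hu _) (memℓp_infty_comp hsum _),
            expect_hmmLaw_head hA hB hp hu, expect_hmmLaw_tail hA hB hp hsum,
            ih (isLaw_kerApp hA hp)]
      _ = ∑ k ∈ Finset.range (n + 1), expect (kerApp B (kerIter A k p)) u := by
          simp only [kerIter_kerApp]
          rw [Finset.sum_range_succ', add_comm, kerIter]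

lemma expect_hmmLaw_sum_of_kerApp_eq (hA : IsKernel A) (hB : IsKernel B) (hp : IsLaw p)
    (hfix : kerApp A p = p) (hu : Memℓp u ∞) :
    expect (hmmLaw p A B n) (fun Y => ∑ i, u (Y i)) = n * expect (kerApp B p) u := by
  simp only [expect_hmmLaw_sum hA hB hp hu, kerIter_eq_self hfix, Finset.sum_const,
    Finset.card_range, nsmul_eq_mul]

lemma IsGeomErgodic.expect_occurrences_le (hA : IsKernel A) (hB : IsKernel B)
    (hge : IsGeomErgodic A π G θ) (x y : ℕ) :
    expect (hmmLaw (A · x) A B n) (occurrences y) ≤ n * kerApp B π y + G * (θ / (1 - θ)) := by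
  have ⟨_, _, _, hπ, _⟩ := hge
  have hindicator : Memℓp (fun v => if v = y then (1 : ℝ) else 0) ∞ :=
    memℓp_infty_of_mem_Icc (a := 0) (b := 1) fun v => by split_ifs <;> simp
  calc expect (hmmLaw (A · x) A B n) (occurrences y)
      = ∑ k ∈ Finset.range n, kerApp B (kerIter A k (A · x)) y := by
        simp only [← expect_single _ y]
        exact expect_hmmLaw_sum hA hB (hA.isLaw x) hindicator
    _ ≤ ∑ k ∈ Finset.range n, (kerApp B π y + tv (kerIter A k (A · x)) π) :=
        Finset.sum_le_sum fun k _ => sub_le_iff_le_add'.1 <|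
          kerApp_sub_kerApp_le_tv hB (isLaw_kerIter hA (hA.isLaw x) k) hπ.isLaw y
    _ ≤ n * kerApp B π y + G * (θ / (1 - θ)) := by
        rw [Finset.sum_add_distrib, Finset.sum_const, Finset.card_range, nsmul_eq_mul]
        exact add_le_add_right (hge.sum_tv_kerIter_le n x) _

lemma IsGeomErgodic.expect_occurrences_head_le (hA : IsKernel A) (hB : IsKernel B)
    (hge : IsGeomErgodic A π G θ) :
    expect (hmmLaw π A B (n + 1)) (fun Y => occurrences (Y 0) (Fin.tail Y)) ≤
      n * expect (kerApp B π) (kerApp B π) + G * (θ / (1 - θ)) := by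
  have ⟨_, _, _, hπ, _⟩ := hge
  have hfirst := isLaw_jointLaw hπ.isLaw hB.isLaw
  have hocc : Memℓp (fun Y : Fin (n + 1) → ℕ => occurrences (Y 0) (Fin.tail Y)) ∞ :=
    memℓp_infty_of_mem_Icc fun Y => occurrences_mem_Icc _ _
  have hρ := (isLaw_kerApp hB hπ.isLaw).memℓp_infty
  have hρ_snd : Memℓp (fun z : ℕ × ℕ => kerApp B π z.2) ∞ := memℓp_infty_comp hρ _
  have hconst := memℓp_infty_const (α := ℕ × ℕ) (G * (θ / (1 - θ)))
  calc _ = expect (jointLaw π fun x y => B y x)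
            (condMean A B fun Y : Fin (n + 1) → ℕ => occurrences (Y 0) (Fin.tail Y)) :=
        expect_hmmLaw_succ_eq_expect_jointLaw hA hB hπ.isLaw hocc
    _ ≤ expect (jointLaw π fun x y => B y x) fun z =>
          n * kerApp B π z.2 + G * (θ / (1 - θ)) := by
        refine expect_mono hfirst (memℓp_infty_condMean hA hB hocc)
          ((hρ_snd.const_mul _).add hconst) fun z => ?_
        simpa only [condMean, Fin.cons_zero, Fin.tail_cons] using
          hge.expect_occurrences_le hA hB z.1 z.2
    _ = n * expect (kerApp B π) (kerApp B π) + G * (θ / (1 - θ)) := by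
        rw [expect_add hfirst (hρ_snd.const_mul _) hconst, expect_const_mul, expect_const hfirst,
          expect_jointLaw hπ.isLaw hB.isLaw hρ_snd, expect_kerApp hB hπ.isLaw hρ]

lemma IsGeomErgodic.expect_coincidences_le (hA : IsKernel A) (hB : IsKernel B)
    (hge : IsGeomErgodic A π G θ) :
    expect (hmmLaw π A B n) coincidences ≤
      n ^ 2 * expect (kerApp B π) (kerApp B π) + n * (1 + 2 * (G * (θ / (1 - θ)))) := by
  have ⟨_, _, _, hπ, hfix, _⟩ := hge
  induction n with
  | zero => simp [expect_hmmLaw_zero, coincidences]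
  | succ n ih =>
    have hlaw := isLaw_hmmLaw (n := n + 1) hA hB hπ.isLaw
    have hone := memℓp_infty_const (α := Fin (n + 1) → ℕ) 1
    have hhead : Memℓp (fun Y : Fin (n + 1) → ℕ => 2 * occurrences (Y 0) (Fin.tail Y)) ∞ :=
      .const_mul (memℓp_infty_of_mem_Icc fun Y => occurrences_mem_Icc _ _) 2
    have hone_head : Memℓp (fun Y : Fin (n + 1) → ℕ =>
      1 + 2 * occurrences (Y 0) (Fin.tail Y)) ∞ := hone.add hhead
    have hcoin : Memℓp (fun Y : Fin (n + 1) → ℕ => coincidences (Fin.tail Y)) ∞ :=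
      memℓp_infty_comp memℓp_infty_coincidences _
    rw [funext coincidences_succ, expect_add hlaw hone_head hcoin,
      expect_add hlaw hone hhead, expect_const hlaw, expect_const_mul,
      expect_hmmLaw_tail hA hB hπ.isLaw memℓp_infty_coincidences, hfix]
    have hcross := hge.expect_occurrences_head_le (n := n) hA hB
    have hcollision : 0 ≤ expect (kerApp B π) (kerApp B π) := tsum_nonneg fun _ => mul_self_nonneg _
    push_cast
    linarith

lemma IsGeomErgodic.expect_supDist_emp_sq_le (hA : IsKernel A) (hB : IsKernel B)
    (hge : IsGeomErgodic A π G θ) (hn : 0 < n) :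
    expect (hmmLaw π A B n) (fun Y => supDist (kerApp B π) (emp Y) ^ 2) ≤
      (1 + 2 * (G * (θ / (1 - θ)))) / n := by
  have ⟨_, _, _, hπ, hfix, _⟩ := hge
  have hρ := isLaw_kerApp hB hπ.isLaw
  set ρ := kerApp B π
  have hlaw := isLaw_hmmLaw (n := n) hA hB hπ.isLaw
  have hmarginal := expect_hmmLaw_sum_of_kerApp_eq (n := n) hA hB hπ.isLaw hfix hρ.memℓp_infty
  have hconst := memℓp_infty_const (α := Fin n → ℕ) (expect (ρ) (ρ))
  have hsum : Memℓp (fun Y : Fin n → ℕ => (2 / n : ℝ) * ∑ i, ρ (Y i)) ∞ :=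
    (memℓp_infty_sum hρ.memℓp_infty).const_mul _
  have hlin : Memℓp (fun Y : Fin n → ℕ => expect (ρ) (ρ) -
    (2 / n : ℝ) * ∑ i, ρ (Y i)) ∞ := hconst.sub hsum
  have hcoin : Memℓp (fun Y : Fin n → ℕ => (1 / n ^ 2 : ℝ) * coincidences Y) ∞ :=
    memℓp_infty_coincidences.const_mul _
  have hsq : Memℓp (fun Y : Fin n → ℕ => supDist (ρ) (emp Y) ^ 2) ∞ :=
    (memℓp_infty_supDist_emp hn hρ).infty_pow 2
  have hbound : Memℓp (fun Y : Fin n → ℕ => expect (ρ) (ρ) -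
    (2 / n : ℝ) * ∑ i, ρ (Y i) + (1 / n ^ 2 : ℝ) * coincidences Y) ∞ := hlin.add hcoin
  calc _ ≤ expect (hmmLaw π A B n) (fun Y => expect (ρ) (ρ) -
            2 / n * ∑ i, ρ (Y i) + 1 / n ^ 2 * coincidences Y) :=
        expect_mono hlaw hsq hbound (supDist_emp_sq_le hn hρ)
    _ = expect (ρ) (ρ) - 2 / n * (n * expect (ρ) (ρ)) +
          1 / n ^ 2 * expect (hmmLaw π A B n) coincidences := by
        rw [← hmarginal, ← expect_const_mul, ← expect_const_mul, expect_add hlaw hlin hcoin,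
          expect_sub hlaw hconst hsum, expect_const hlaw]
    _ ≤ expect (ρ) (ρ) - 2 / n * (n * expect (ρ) (ρ)) +
          1 / n ^ 2 * (n ^ 2 * expect (ρ) (ρ) +
            n * (1 + 2 * (G * (θ / (1 - θ))))) := by
        gcongr
        exact hge.expect_coincidences_le hA hB
    _ = (1 + 2 * (G * (θ / (1 - θ)))) / n := by
        field_simp
        ring

lemma IsGeomErgodic.expect_supDist_emp_le (hA : IsKernel A) (hB : IsKernel B)
    (hge : IsGeomErgodic A π G θ) (hn : 0 < n) :
    expect (hmmLaw π A B n) (fun Y => supDist (kerApp B π) (emp Y)) ≤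
      √((1 + 2 * G * θ) / (n * (1 - θ))) := by
  have ⟨_, hθ₀, hθ₁, hπ, _⟩ := hge
  have hbdd := memℓp_infty_supDist_emp hn (isLaw_kerApp hB hπ.isLaw)
  refine Real.le_sqrt_of_sq_le ?_
  calc _ ≤ (1 + 2 * (G * (θ / (1 - θ)))) / n :=
        (sq_expect_le (isLaw_hmmLaw hA hB hπ.isLaw) hbdd).trans
          (hge.expect_supDist_emp_sq_le hA hB hn)
    _ = (1 + 2 * G * θ) / (n * (1 - θ)) - θ / (n * (1 - θ)) := by
        have : 1 - θ ≠ 0 := (sub_pos.2 hθ₁).ne'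
        field_simp
        ring
    _ ≤ (1 + 2 * G * θ) / (n * (1 - θ)) := sub_le_self _ <|
        div_nonneg hθ₀ (mul_nonneg n.cast_nonneg (sub_pos.2 hθ₁).le)

end SecondMoment

/-- **Theorem 2 (DKW-type inequality).** For a stationary `(G,θ)`-geometrically ergodic hidden
Markov chain with stationary output distribution `ρ = Bπ` and empirical distribution `ρ̂⁽ⁿ⁾`,
`P(‖ρ − ρ̂⁽ⁿ⁾‖_∞ > √((1+2Gθ)/(n(1−θ))) + ε) ≤ exp(−n(1−θ)²ε²/(2G²))`. -/
theorem dkw_type (G θ : ℝ) (π : ℕ → ℝ) (A B : ℕ → ℕ → ℝ)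
    (hA : IsKernel A) (hB : IsKernel B) (hge : IsGeomErgodic A π G θ)
    (n : ℕ) (hn : 0 < n) (ε : ℝ) (hε : 0 < ε) :
    prob (hmmLaw π A B n)
        {Y | (⨆ v : ℕ, |kerApp B π v - emp Y v|)
              > Real.sqrt ((1 + 2 * G * θ) / (n * (1 - θ))) + ε}
      ≤ Real.exp (-(n * (1 - θ) ^ 2 * ε ^ 2) / (2 * G ^ 2)) := by
  have ⟨hG, _, hθ₁, hπ, _⟩ := hge
  have hρ : IsLaw (kerApp B π) := isLaw_kerApp hB hπ.isLaw
  have hmean := hge.expect_supDist_emp_le hA hB hn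
  have htail := prob_hmmLaw_expect_add_le hA hB hπ.isLaw (hge.one_add_sum_tv_le hA)
    (memℓp_infty_supDist_emp hn hρ) (boundedDifferences_supDist_emp hn hρ) hε.le
  refine (prob_mono (isLaw_hmmLaw hA hB hπ.isLaw) fun Y hY => ?_).trans (htail.trans_eq ?_)
  · exact (add_le_add_left hmean ε).trans (le_of_lt hY)
  · have : 1 - θ ≠ 0 := (sub_pos.2 hθ₁).ne'
    congr 1
    field_simp

end
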